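/- Let m ∈ ℝ, let σ ∈ S^m_f(ℝ^{2n}) and let z ∈ ℂ be such that there is c₀ > 0 with |z − σ(q, p)| ≥ c₀ ⟨ρ ⊕ f(r)^{-1}η⟩^m for all (q, p) ∈ ℝ^{2n}. Then the function (z − σ)^{-1} belongs to S^{-m}_f(ℝ^{2n}), and for every N ∈ ℕ there exists a constant C > 0, depending only on n, m, N and the seminorm |σ|_{S^m_f, N}, such that |(z − σ)^{-1}|_{S^{-m}_f, N} ≤ C Σ_{l=0}^{N} sup_{(q,p) ∈ ℝ^{2n}} ⟨ρ ⊕ f(r)^{-1}η⟩^{m(l+1)} |z − σ(q, p)|^{-(l+1)}. -/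

import Mathlib

open MeasureTheory Finset

noncomputable section

/-- Points of `ℝⁿ` (with `n = d + 1`) split as `q = (r, θ) ∈ ℝ × ℝ^d`. -/
abbrev Q (d : ℕ) : Type := ℝ × (Fin d → ℝ)

/-- The coordinate direction `∂_r`. -/
def eR (d : ℕ) : Q d := ((1 : ℝ), 0)

/-- The coordinate direction `∂_{θ_i}`. -/
def eTh (d : ℕ) (i : Fin d) : Q d := ((0 : ℝ), Pi.single i 1)

/-- Directional derivative of a complex-valued function. -/
def dirD {E : Type*} [NormedAddCommGroup E] [NormedSpace ℝ E]
    (v : E) (g : E → ℂ) : E → ℂ :=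
  fun x => fderiv ℝ g x v

/-- Multiindices `α = (α₀, α')` split as in the paper. -/
abbrev MIdx (d : ℕ) : Type := ℕ × (Fin d → ℕ)

/-- `|α| = α₀ + |α'|`. -/
def deg {d : ℕ} (α : MIdx d) : ℕ := α.1 + ∑ i, α.2 i

/-- `|α'|`, the angular part of a multiindex. -/
def degA {d : ℕ} (α : MIdx d) : ℕ := ∑ i, α.2 i

/-- `∂_q^α` acting on functions on `ℝⁿ = ℝ × ℝ^d`. -/
def mderiv1 {d : ℕ} (α : MIdx d) (g : Q d → ℂ) : Q d → ℂ :=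
  (dirD (eR d))^[α.1] <|
    (List.finRange d).foldr (fun i h => (dirD (eTh d i))^[α.2 i] h) g

/-- `∂_q^α ∂_p^β` acting on functions on phase space. -/
def mderiv2 {d : ℕ} (α β : MIdx d) (g : Q d × Q d → ℂ) : Q d × Q d → ℂ :=
  (dirD ((eR d, 0) : Q d × Q d))^[α.1] <|
  (List.finRange d).foldr (fun i h => (dirD ((eTh d i, 0) : Q d × Q d))^[α.2 i] h) <|
  (dirD (((0 : Q d), eR d) : Q d × Q d))^[β.1] <|
  (List.finRange d).foldr (fun i h => (dirD (((0 : Q d), eTh d i) : Q d × Q d))^[β.2 i] h) g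

/-- `∂_q^α ∂_p^β ∂_{q'}^γ` acting on amplitudes `a(q, p, q')`. -/
def mderiv3 {d : ℕ} (α β γ : MIdx d) (g : Q d × Q d × Q d → ℂ) : Q d × Q d × Q d → ℂ :=
  (dirD ((eR d, 0, 0) : Q d × Q d × Q d))^[α.1] <|
  (List.finRange d).foldr (fun i h => (dirD ((eTh d i, 0, 0) : Q d × Q d × Q d))^[α.2 i] h) <|
  (dirD (((0 : Q d), eR d, 0) : Q d × Q d × Q d))^[β.1] <|
  (List.finRange d).foldr (fun i h => (dirD (((0 : Q d), eTh d i, 0) : Q d × Q d × Q d))^[β.2 i] h) <|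
  (dirD (((0 : Q d), (0 : Q d), eR d) : Q d × Q d × Q d))^[γ.1] <|
  (List.finRange d).foldr (fun i h => (dirD (((0 : Q d), (0 : Q d), eTh d i) : Q d × Q d × Q d))^[γ.2 i] h) g

/-- `⟨p⟩ = (1 + ρ² + |η|²)^{1/2}`. -/
def brP {d : ℕ} (p : Q d) : ℝ := Real.sqrt (1 + p.1 ^ 2 + ∑ i, (p.2 i) ^ 2)

/-- `⟨ρ ⊕ f(r)⁻¹ η⟩` evaluated at a phase-space point. -/
def brF {d : ℕ} (f : ℝ → ℝ) (x : Q d × Q d) : ℝ :=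
  Real.sqrt (1 + x.2.1 ^ 2 + ∑ i, (x.2.2 i / f x.1.1) ^ 2)

/-- The standing assumption on `f : ℝ → [1, ∞)`: smooth, `f ≥ 1`, and all derivatives
of `log f` of order `≥ 1` are bounded. -/
def GoodF (f : ℝ → ℝ) : Prop :=
  ContDiff ℝ (⊤ : ℕ∞) f ∧ (∀ r, 1 ≤ f r) ∧
    ∀ j : ℕ, 1 ≤ j → ∃ C : ℝ, ∀ r, |iteratedDeriv j (fun s => Real.log (f s)) r| ≤ C

/-- Membership in the symbol class `S^m_f(ℝ^{2n})`. -/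
def IsSymbol {d : ℕ} (f : ℝ → ℝ) (m : ℝ) (a : Q d × Q d → ℂ) : Prop :=
  ContDiff ℝ (⊤ : ℕ∞) a ∧
    ∀ α β : MIdx d, ∃ C : ℝ, ∀ x : Q d × Q d,
      ‖mderiv2 α β a x‖ ≤ C * f x.1.1 ^ ((degA α : ℝ) - (degA β : ℝ)) * brF f x ^ (m - (deg β : ℝ))

/-- The finite set of multiindices of length `≤ N`. -/
def idxSet (d N : ℕ) : Finset (MIdx d) :=
  ((Finset.range (N + 1)) ×ˢ Fintype.piFinset fun _ : Fin d => Finset.range (N + 1)).filter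
    fun α => deg α ≤ N

/-- The seminorm `|a|_{S^m_f, N}`. -/
def symNorm {d : ℕ} (f : ℝ → ℝ) (m : ℝ) (N : ℕ) (a : Q d × Q d → ℂ) : ℝ :=
  ∑ α ∈ idxSet d N, ∑ β ∈ idxSet d N,
    if deg α + deg β ≤ N then
      ⨆ x : Q d × Q d,
        f x.1.1 ^ (-(degA α : ℝ) + (degA β : ℝ)) * brF f x ^ (-m + (deg β : ℝ)) *
          ‖mderiv2 α β a x‖
    else 0

/-- `p · q`. -/
def qdot {d : ℕ} (p q : Q d) : ℝ := p.1 * q.1 + ∑ i, p.2 i * q.2 i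

/-- The oscillating factor `e^{i p · v / ℏ}`. -/
def ephase {d : ℕ} (ℏ : ℝ) (p v : Q d) : ℂ :=
  Complex.exp (Complex.I * Complex.ofReal (qdot p v) / Complex.ofReal ℏ)

/-- The quantization `Op^t_ℏ(a)` of a symbol, acting on functions (trivialized half-densities). -/
def Op {d : ℕ} (ℏ t : ℝ) (a : Q d × Q d → ℂ) (u : Q d → ℂ) : Q d → ℂ :=
  fun q => ((2 * Real.pi * ℏ) ^ (d + 1) : ℝ)⁻¹ •
    ∫ p : Q d, ∫ q' : Q d,
      a (t • q + (1 - t) • q', p) * ephase ℏ p (q - q') * u q'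

/-- Membership in `C_c^∞(ℝⁿ)`. -/
def IsCc {d : ℕ} (u : Q d → ℂ) : Prop := ContDiff ℝ (⊤ : ℕ∞) u ∧ HasCompactSupport u

/-- The `L²` inner product `⟨w, v⟩ = ∫ w \bar v`. -/
def l2inner {d : ℕ} (w v : Q d → ℂ) : ℂ := ∫ q : Q d, w q * (starRingEnd ℂ) (v q)

/-- The `L²` norm. -/
def l2norm {d : ℕ} (u : Q d → ℂ) : ℝ := (∫ q : Q d, ‖u q‖ ^ 2) ^ (1 / 2 : ℝ)

/-- `Σ_{|β| ≤ N} sup |∂^β u|`. -/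
def ckNorm {d : ℕ} (N : ℕ) (u : Q d → ℂ) : ℝ :=
  ∑ β ∈ idxSet d N, ⨆ q : Q d, ‖mderiv1 β u q‖

/-- `⟨ρ ⊕ f(tr + (1-t)r')⁻¹ η⟩` evaluated at a point `(q, p, q')`. -/
def brFA {d : ℕ} (f : ℝ → ℝ) (t : ℝ) (x : Q d × Q d × Q d) : ℝ :=
  Real.sqrt (1 + x.2.1.1 ^ 2 + ∑ i, (x.2.1.2 i / f (t * x.1.1 + (1 - t) * x.2.2.1)) ^ 2)

/-- Membership in the amplitude class `BS^m_{f,t}(ℝ^{3n})`. -/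
def IsAmp {d : ℕ} (f : ℝ → ℝ) (m t : ℝ) (a : Q d × Q d × Q d → ℂ) : Prop :=
  ContDiff ℝ (⊤ : ℕ∞) a ∧
    ∀ α β γ : MIdx d, ∃ C : ℝ, ∀ x : Q d × Q d × Q d,
      ‖mderiv3 α β γ a x‖ ≤
        C * f (t * x.1.1 + (1 - t) * x.2.2.1) ^ ((degA α : ℝ) - (degA β : ℝ) + (degA γ : ℝ)) *
          brFA f t x ^ (m - (deg β : ℝ))

/-- The seminorm `|a|_{BS^m_{f,t}, N}`. -/
def ampNorm {d : ℕ} (f : ℝ → ℝ) (m t : ℝ) (N : ℕ) (a : Q d × Q d × Q d → ℂ) : ℝ :=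
  ∑ α ∈ idxSet d N, ∑ β ∈ idxSet d N, ∑ γ ∈ idxSet d N,
    if deg α + deg β + deg γ ≤ N then
      ⨆ x : Q d × Q d × Q d,
        f (t * x.1.1 + (1 - t) * x.2.2.1) ^ (-(degA α : ℝ) + (degA β : ℝ) - (degA γ : ℝ)) *
          brFA f t x ^ (-m + (deg β : ℝ)) * ‖mderiv3 α β γ a x‖
    else 0

/-- The quantization of an amplitude `a(q, p, q')`. -/
def OpAmp {d : ℕ} (ℏ : ℝ) (a : Q d × Q d × Q d → ℂ) (u : Q d → ℂ) : Q d → ℂ :=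
  fun q => ((2 * Real.pi * ℏ) ^ (d + 1) : ℝ)⁻¹ •
    ∫ p : Q d, ∫ q' : Q d, a (q, p, q') * ephase ℏ p (q - q') * u q'


/-!
By the Faà di Bruno formula, a derivative of `(z - σ)⁻¹` along a word of coordinates is the sum,
over the partitions of the letters of the word into blocks, of `k! (z - σ)^{-(k+1)}` times the
product of the derivatives of `σ` along the blocks, `k` being the number of blocks. A derivative of
a symbol of order `m` along a word is bounded by `⟨·⟩^m` times one weight per letter, whatever the
order of the letters. Each letter lies in exactly one block, so the weights multiply to the weight
of the whole word, and the remaining factor `⟨·⟩^{mk} |z - σ|^{-(k+1)}` is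
`⟨·⟩^{-m} (⟨·⟩^m / |z - σ|)^{k+1}`.
-/

open scoped Nat ContDiff

section Resolvent

variable {𝕜 𝕜' E : Type*} [NontriviallyNormedField 𝕜] [NormedAddCommGroup E] [NormedSpace 𝕜 E]

theorem iteratedDeriv_inv_const_sub [NontriviallyNormedField 𝕜'] (k : ℕ) (z w : 𝕜') :
    iteratedDeriv k (fun y => (z - y)⁻¹) w = k ! * (z - w)⁻¹ ^ (k + 1) := by
  have h := congrFun (iter_deriv_inv_linear k (-1 : 𝕜') z) w
  simp only [neg_one_mul, neg_add_eq_sub] at h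
  have hpow : (z - w) ^ (-1 - k : ℤ) = (z - w)⁻¹ ^ (k + 1) := by
    rw [← neg_add', ← Nat.cast_one_add, zpow_neg, zpow_natCast, inv_pow, add_comm]
  rw [iteratedDeriv_eq_iterate, h, hpow, mul_right_comm ((-1) ^ k), ← mul_pow, neg_one_mul,
    neg_neg, one_pow, one_mul]

theorem iteratedFDeriv_inv_const_sub_apply [NontriviallyNormedField 𝕜'] [NormedAlgebra 𝕜 𝕜']
    {k : ℕ} {z w : 𝕜'} (hw : z - w ≠ 0) (u : Fin k → 𝕜') :
    iteratedFDeriv 𝕜 k (fun y => (z - y)⁻¹) w u = k ! * (z - w)⁻¹ ^ (k + 1) * ∏ i, u i := by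
  have hsmooth : ContDiffAt 𝕜' k (fun y => (z - y)⁻¹) w :=
    (contDiffAt_const.sub contDiffAt_id).inv hw
  rw [← hsmooth.restrictScalars_iteratedFDeriv (𝕜 := 𝕜), Function.comp_apply,
    ContinuousMultilinearMap.coe_restrictScalars, iteratedFDeriv_apply_eq_iteratedDeriv_mul_prod,
    iteratedDeriv_inv_const_sub, smul_eq_mul, mul_comm]

theorem iteratedFDeriv_inv_const_sub_comp_apply [NontriviallyNormedField 𝕜'] [NormedAlgebra 𝕜 𝕜']
    {n : ℕ} {g : E → 𝕜'} {x : E} {z : 𝕜'} (hg : ContDiffAt 𝕜 n g x) (hz : z - g x ≠ 0)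
    (v : Fin n → E) :
    iteratedFDeriv 𝕜 n (fun y => (z - g y)⁻¹) x v =
      ∑ c : OrderedFinpartition n, c.length ! * (z - g x)⁻¹ ^ (c.length + 1) *
        ∏ i, iteratedFDeriv 𝕜 (c.partSize i) g x (v ∘ c.emb i) := by
  have hsmooth : ContDiffAt 𝕜 n (fun y => (z - y)⁻¹) (g x) :=
    (contDiffAt_const.sub contDiffAt_id).inv hz
  have hcomp := iteratedFDeriv_comp hsmooth hg le_rfl
  simp only [Function.comp_def] at hcomp
  rw [hcomp, FormalMultilinearSeries.taylorComp, _root_.sum_apply]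
  refine Finset.sum_congr rfl fun c _ => ?_
  exact iteratedFDeriv_inv_const_sub_apply hz _

/-- The constant in the Faà di Bruno estimate for the `n`-th derivatives of `(z - g)⁻¹`: the sum of
`k! A ^ k` over all partitions of `n` letters, `k` being the number of blocks. -/
def resolventConst (n : ℕ) (A : ℝ) : ℝ :=
  ∑ c : OrderedFinpartition n, c.length ! * A ^ c.length

theorem resolventConst_nonneg (n : ℕ) {A : ℝ} (hA : 0 ≤ A) : 0 ≤ resolventConst n A := by
  unfold resolventConst
  positivity

theorem resolventConst_le_resolventConst (n : ℕ) {A B : ℝ} (hA : 0 ≤ A) (hAB : A ≤ B) :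
    resolventConst n A ≤ resolventConst n B := by
  unfold resolventConst
  gcongr

theorem norm_iteratedFDeriv_inv_const_sub_comp_apply_le [RCLike 𝕜'] [NormedAlgebra 𝕜 𝕜']
    {n : ℕ} {g : E → 𝕜'} {x : E} {z : 𝕜'} (hg : ContDiffAt 𝕜 n g x) (hz : z - g x ≠ 0)
    {v : Fin n → E} {w : Fin n → ℝ} {M : ℝ}
    (h : ∀ k ≤ n, ∀ e : Fin k → Fin n,
      ‖iteratedFDeriv 𝕜 k g x (v ∘ e)‖ ≤ M * ∏ j, w (e j)) :
    ‖iteratedFDeriv 𝕜 n (fun y => (z - g y)⁻¹) x v‖ ≤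
      (∑ c : OrderedFinpartition n, c.length ! * (M ^ c.length / ‖z - g x‖ ^ (c.length + 1))) *
        ∏ j, w j := by
  rw [iteratedFDeriv_inv_const_sub_comp_apply hg hz, Finset.sum_mul]
  refine norm_sum_le_of_le _ fun c _ => ?_
  have hblocks : ∏ i, ‖iteratedFDeriv 𝕜 (c.partSize i) g x (v ∘ c.emb i)‖ ≤
      M ^ c.length * ∏ j, w j :=
    calc ∏ i, ‖iteratedFDeriv 𝕜 (c.partSize i) g x (v ∘ c.emb i)‖
        ≤ ∏ i, (M * ∏ j, w (c.emb i j)) :=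
          Finset.prod_le_prod (fun _ _ => norm_nonneg _)
            fun i _ => h _ (c.partSize_le i) (c.emb i)
      _ = M ^ c.length * ∏ j, w j := by
          rw [Finset.prod_mul_distrib, Fin.prod_const, c.prod_sigma_eq_prod]
  calc _ = c.length ! * (‖z - g x‖ ^ (c.length + 1))⁻¹ *
        ∏ i, ‖iteratedFDeriv 𝕜 (c.partSize i) g x (v ∘ c.emb i)‖ := by
        rw [norm_mul, norm_mul, RCLike.norm_natCast, norm_pow, norm_inv, inv_pow, norm_prod]
    _ ≤ c.length ! * (‖z - g x‖ ^ (c.length + 1))⁻¹ * (M ^ c.length * ∏ j, w j) := by gcongr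
    _ = c.length ! * (M ^ c.length / ‖z - g x‖ ^ (c.length + 1)) * ∏ j, w j := by ring

theorem sum_factorial_mul_pow_div_le {n N : ℕ} (hn : n ≤ N) {A b s : ℝ} (hA : 0 ≤ A) (hb : 0 < b)
    (hs : 0 ≤ s) :
    ∑ c : OrderedFinpartition n, c.length ! * ((A * b) ^ c.length / s ^ (c.length + 1)) ≤
      resolventConst n A * (∑ l ∈ range (N + 1), b ^ (l + 1) / s ^ (l + 1)) * b⁻¹ := by
  rw [resolventConst, Finset.sum_mul, Finset.sum_mul]
  refine Finset.sum_le_sum fun c _ => ?_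
  have hterm : b ^ (c.length + 1) / s ^ (c.length + 1) ≤
      ∑ l ∈ range (N + 1), b ^ (l + 1) / s ^ (l + 1) :=
    Finset.single_le_sum (f := fun l => b ^ (l + 1) / s ^ (l + 1)) (fun l _ => by positivity)
      (Finset.mem_range.2 (Nat.lt_succ_of_le (c.length_le.trans hn)))
  calc c.length ! * ((A * b) ^ c.length / s ^ (c.length + 1))
      = c.length ! * A ^ c.length * (b ^ (c.length + 1) / s ^ (c.length + 1)) * b⁻¹ := by
        rw [mul_pow, pow_succ b]
        field_simp
    _ ≤ _ := by gcongr

end Resolvent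

section WordDeriv

variable {E ι : Type*} [NormedAddCommGroup E] [NormedSpace ℝ E] {g : E → ℂ}

theorem contDiff_dirD (hg : ContDiff ℝ ∞ g) (v : E) : ContDiff ℝ ∞ (dirD v g) :=
  (hg.fderiv_right le_rfl).clm_apply contDiff_const

theorem dirD_dirD_apply (hg : ContDiff ℝ 2 g) (v w x : E) :
    dirD v (dirD w g) x = fderiv ℝ (fderiv ℝ g) x v w := by
  have hd : DifferentiableAt ℝ (fderiv ℝ g) x :=
    (hg.fderiv_right (m := 1) le_rfl).differentiable one_ne_zero x
  change fderiv ℝ (fun y => fderiv ℝ g y w) x v = _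
  simp [fderiv_clm_apply hd (differentiableAt_const w)]

theorem dirD_comm (hg : ContDiff ℝ 2 g) (v w : E) :
    dirD v (dirD w g) = dirD w (dirD v g) := by
  funext x
  rw [dirD_dirD_apply hg, dirD_dirD_apply hg]
  exact (hg.contDiffAt.isSymmSndFDerivAt (by simp)).eq v w

variable (v : ι → E)

/-- The iterated directional derivative of `g` along the word `L`, a letter `i` standing for the
direction `v i` and the leftmost letter acting last. Mixed partial derivatives are the case of a
word of coordinate directions. -/
def wordDeriv (L : List ι) (g : E → ℂ) : E → ℂ :=
  L.foldr (fun i => dirD (v i)) g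

theorem wordDeriv_append (L M : List ι) (g : E → ℂ) :
    wordDeriv v (L ++ M) g = wordDeriv v L (wordDeriv v M g) :=
  List.foldr_append

theorem wordDeriv_replicate (k : ℕ) (i : ι) (g : E → ℂ) :
    wordDeriv v (List.replicate k i) g = (dirD (v i))^[k] g := by
  induction k with
  | zero => rfl
  | succ k ih =>
    rw [Function.iterate_succ_apply', ← ih]
    rfl

theorem wordDeriv_flatMap_replicate {κ : Type*} (l : List κ) (k : κ → ℕ) (e : κ → ι)
    (g : E → ℂ) :
    wordDeriv v (l.flatMap fun i => List.replicate (k i) (e i)) g =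
      l.foldr (fun i h => (dirD (v (e i)))^[k i] h) g := by
  induction l with
  | nil => rfl
  | cons i l ih =>
    rw [List.flatMap_cons, wordDeriv_append, ih, wordDeriv_replicate, List.foldr_cons]

theorem contDiff_wordDeriv (hg : ContDiff ℝ ∞ g) (L : List ι) :
    ContDiff ℝ ∞ (wordDeriv v L g) := by
  induction L with
  | nil => exact hg
  | cons i L ih => exact contDiff_dirD ih (v i)

theorem wordDeriv_perm (hg : ContDiff ℝ ∞ g) {L M : List ι} (h : L.Perm M) :
    wordDeriv v L g = wordDeriv v M g := by
  induction h with
  | nil => rfl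
  | cons i _ ih => exact congrArg (dirD (v i)) ih
  | swap i j L =>
    exact dirD_comm ((contDiff_wordDeriv v hg L).of_le (WithTop.coe_le_coe.2 le_top)) _ _
  | trans _ _ ih₁ ih₂ => exact ih₁.trans ih₂

theorem wordDeriv_ofFn {n : ℕ} (hg : ContDiff ℝ n g) (e : Fin n → ι) :
    wordDeriv v (List.ofFn e) g = fun x => iteratedFDeriv ℝ n g x (v ∘ e) := by
  induction n with
  | zero => rfl
  | succ n ih =>
    have hd : Differentiable ℝ (iteratedFDeriv ℝ n g) :=
      hg.differentiable_iteratedFDeriv (mod_cast n.lt_succ_self)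
    rw [List.ofFn_succ]
    change dirD _ (wordDeriv v _ g) = _
    rw [ih (hg.of_le (mod_cast n.le_succ))]
    funext x
    rw [iteratedFDeriv_succ_apply_left, dirD, fderiv_continuousMultilinear_apply_const_apply (hd x)]
    rfl

end WordDeriv

section PhaseSpace

variable {d : ℕ}

/-- The coordinates `r, θ, ρ, η` of phase space, the letters of the words along which symbols are
differentiated. -/
inductive PhaseCoord (d : ℕ) : Type
  | r
  | θ (i : Fin d)
  | ρ
  | η (i : Fin d)
  deriving DecidableEq

namespace PhaseCoord

/-- The unit vector of phase space in the direction of a coordinate. -/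
def vector : PhaseCoord d → Q d × Q d
  | r => (eR d, 0)
  | θ i => (eTh d i, 0)
  | ρ => (0, eR d)
  | η i => (0, eTh d i)

/-- The factor which a derivative in the direction of a coordinate costs, at the point `x`, in the
estimates defining `S^m_f`. -/
def weight (f : ℝ → ℝ) (x : Q d × Q d) : PhaseCoord d → ℝ
  | r => 1
  | θ _ => f x.1.1
  | ρ => (brF f x)⁻¹
  | η _ => (f x.1.1)⁻¹ * (brF f x)⁻¹

/-- The word of coordinates spelling out `∂_q^α ∂_p^β` in the order used by `mderiv2`. -/
def multiindexWord (α β : MIdx d) : List (PhaseCoord d) :=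
  List.replicate α.1 r ++
    (((List.finRange d).flatMap fun i => List.replicate (α.2 i) (θ i)) ++
      (List.replicate β.1 ρ ++
        ((List.finRange d).flatMap fun i => List.replicate (β.2 i) (η i))))

theorem mderiv2_eq_wordDeriv (α β : MIdx d) (g : Q d × Q d → ℂ) :
    mderiv2 α β g = wordDeriv vector (multiindexWord α β) g := by
  rw [multiindexWord, wordDeriv_append, wordDeriv_append, wordDeriv_append,
    wordDeriv_flatMap_replicate, wordDeriv_flatMap_replicate, wordDeriv_replicate,
    wordDeriv_replicate]
  rfl

theorem length_multiindexWord (α β : MIdx d) : (multiindexWord α β).length = deg α + deg β := by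
  simp only [multiindexWord, deg, List.length_append, List.length_replicate, List.length_flatMap,
    Fin.sum_univ_def]
  ring

theorem count_multiindexWord (α β : MIdx d) (i : PhaseCoord d) :
    (multiindexWord α β).count i =
      match i with
      | r => α.1
      | θ j => α.2 j
      | ρ => β.1
      | η j => β.2 j := by
  cases i <;>
    simp [multiindexWord, List.count_replicate, List.count_flatMap, Function.comp_def,
      ← Fin.sum_univ_def]

theorem exists_perm_multiindexWord (L : List (PhaseCoord d)) :
    ∃ α β : MIdx d, L.Perm (multiindexWord α β) := by
  refine ⟨(L.count r, fun i => L.count (θ i)), (L.count ρ, fun i => L.count (η i)), ?_⟩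
  rw [List.perm_iff_count]
  intro i
  cases i <;> simp only [count_multiindexWord]

end PhaseCoord

open PhaseCoord

theorem brF_pos (f : ℝ → ℝ) (x : Q d × Q d) : 0 < brF f x :=
  Real.sqrt_pos.2 (by positivity)

theorem PhaseCoord.weight_pos {f : ℝ → ℝ} (hf : ∀ r, 0 < f r) (x : Q d × Q d)
    (i : PhaseCoord d) : 0 < weight f x i := by
  have hF := hf x.1.1
  have hb := brF_pos f x
  cases i <;> simp only [weight] <;> positivity

theorem mem_idxSet {N : ℕ} {α : MIdx d} : α ∈ idxSet d N ↔ deg α ≤ N := by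
  refine ⟨fun h => (Finset.mem_filter.1 h).2, fun h => Finset.mem_filter.2 ⟨?_, h⟩⟩
  have hangular (i : Fin d) : α.2 i ≤ ∑ j, α.2 j :=
    Finset.single_le_sum (fun j _ => Nat.zero_le (α.2 j)) (Finset.mem_univ i)
  simp only [Finset.mem_product, Finset.mem_range, Fintype.mem_piFinset]
  unfold deg at h
  exact ⟨by omega, fun i => by have := hangular i; omega⟩

/-- The weight `f(r)^{|α'| - |β'|} ⟨ρ ⊕ f(r)⁻¹η⟩^{m - |β|}` which bounds `∂_q^α ∂_p^β a` for a
symbol `a ∈ S^m_f`. -/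
def symWeight (f : ℝ → ℝ) (m : ℝ) (α β : MIdx d) (x : Q d × Q d) : ℝ :=
  f x.1.1 ^ ((degA α : ℝ) - (degA β : ℝ)) * brF f x ^ (m - (deg β : ℝ))

variable {f : ℝ → ℝ} {m : ℝ}

theorem symWeight_pos (hf : ∀ r, 0 < f r) (α β : MIdx d) (x : Q d × Q d) :
    0 < symWeight f m α β x :=
  mul_pos (Real.rpow_pos_of_pos (hf _) _) (Real.rpow_pos_of_pos (brF_pos f x) _)

theorem symWeight_inv (hf : ∀ r, 0 < f r) (α β : MIdx d) (x : Q d × Q d) :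
    (symWeight f m α β x)⁻¹ =
      f x.1.1 ^ (-(degA α : ℝ) + (degA β : ℝ)) * brF f x ^ (-m + (deg β : ℝ)) := by
  rw [symWeight, mul_inv, ← Real.rpow_neg (hf _).le, ← Real.rpow_neg (brF_pos f x).le, neg_sub',
    neg_sub', sub_neg_eq_add, sub_neg_eq_add]

theorem rpow_mul_prod_weight_multiindexWord (hf : ∀ r, 0 < f r) (α β : MIdx d)
    (x : Q d × Q d) :
    brF f x ^ m * ((multiindexWord α β).map (weight f x)).prod = symWeight f m α β x := by
  have hF := hf x.1.1
  have hb := brF_pos f x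
  have hprod : ((multiindexWord α β).map (weight f x)).prod =
      f x.1.1 ^ degA α * ((brF f x)⁻¹ ^ β.1 * ((f x.1.1)⁻¹ * (brF f x)⁻¹) ^ degA β) := by
    simp only [multiindexWord, List.map_append, List.prod_append, List.flatMap_def,
      List.map_flatten, List.prod_flatten, List.map_map, Function.comp_def, List.map_replicate,
      List.prod_replicate, ← Fin.prod_univ_def, Finset.prod_pow_eq_pow_sum, weight, one_pow,
      one_mul, degA]
  have hdeg : deg β = β.1 + degA β := rfl
  rw [hprod, symWeight, Real.rpow_sub hF, Real.rpow_sub hb, Real.rpow_natCast, Real.rpow_natCast,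
    Real.rpow_natCast, hdeg, pow_add, mul_pow, inv_pow, inv_pow, inv_pow]
  field_simp

/-- The weighted supremum of `∂_q^α ∂_p^β a`, one of the summands of the seminorms of `S^m_f`; it is
`0` by convention when the supremum is infinite. -/
def symSup (f : ℝ → ℝ) (m : ℝ) (α β : MIdx d) (a : Q d × Q d → ℂ) : ℝ :=
  ⨆ x, (symWeight f m α β x)⁻¹ * ‖mderiv2 α β a x‖

theorem symSup_nonneg (hf : ∀ r, 0 < f r) (α β : MIdx d) (a : Q d × Q d → ℂ) :
    0 ≤ symSup f m α β a :=
  Real.iSup_nonneg fun x => mul_nonneg (inv_nonneg.2 (symWeight_pos hf α β x).le) (norm_nonneg _)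

theorem symSup_le {a : Q d × Q d → ℂ} (hf : ∀ r, 0 < f r) {α β : MIdx d} {K : ℝ}
    (h : ∀ x, ‖mderiv2 α β a x‖ ≤ K * symWeight f m α β x) : symSup f m α β a ≤ K :=
  ciSup_le fun x => (inv_mul_le_iff₀' (symWeight_pos hf α β x)).2 (h x)

theorem IsSymbol.norm_mderiv2_le_symSup {a : Q d × Q d → ℂ} (hf : ∀ r, 0 < f r)
    (ha : IsSymbol f m a) (α β : MIdx d) (x : Q d × Q d) :
    ‖mderiv2 α β a x‖ ≤ symSup f m α β a * symWeight f m α β x := by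
  obtain ⟨C, hC⟩ := ha.2 α β
  have hbdd : BddAbove (Set.range fun y => (symWeight f m α β y)⁻¹ * ‖mderiv2 α β a y‖) := by
    refine ⟨C, Set.forall_mem_range.2 fun y => ?_⟩
    rw [inv_mul_le_iff₀' (symWeight_pos hf α β y), symWeight, ← mul_assoc]
    exact hC y
  exact (inv_mul_le_iff₀' (symWeight_pos hf α β x)).1 (le_ciSup hbdd x)

theorem symNorm_eq_sum_symSup (hf : ∀ r, 0 < f r) (N : ℕ) (a : Q d × Q d → ℂ) :
    symNorm f m N a = ∑ α ∈ idxSet d N, ∑ β ∈ idxSet d N with deg α + deg β ≤ N,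
      symSup f m α β a := by
  simp only [symSup, symWeight_inv hf, symNorm, Finset.sum_filter]

theorem symNorm_nonneg (hf : ∀ r, 0 < f r) (N : ℕ) (a : Q d × Q d → ℂ) : 0 ≤ symNorm f m N a := by
  rw [symNorm_eq_sum_symSup hf]
  exact Finset.sum_nonneg fun α _ => Finset.sum_nonneg fun β _ => symSup_nonneg hf α β a

theorem symSup_le_symNorm (hf : ∀ r, 0 < f r) {N : ℕ} {α β : MIdx d} (hN : deg α + deg β ≤ N)
    (a : Q d × Q d → ℂ) : symSup f m α β a ≤ symNorm f m N a := by
  rw [symNorm_eq_sum_symSup hf]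
  have hβ : β ∈ {β ∈ idxSet d N | deg α + deg β ≤ N} :=
    Finset.mem_filter.2 ⟨mem_idxSet.2 (by omega), hN⟩
  exact (Finset.single_le_sum (fun β _ => symSup_nonneg hf α β a) hβ).trans
    (Finset.single_le_sum
      (f := fun α => ∑ β ∈ idxSet d N with deg α + deg β ≤ N, symSup f m α β a)
      (fun α _ => Finset.sum_nonneg fun β _ => symSup_nonneg hf α β a)
      (mem_idxSet.2 (by omega)))

theorem IsSymbol.norm_iteratedFDeriv_apply_le {a : Q d × Q d → ℂ} (hf : ∀ r, 0 < f r)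
    (ha : IsSymbol f m a) {k N : ℕ} (hk : k ≤ N) (e : Fin k → PhaseCoord d) (x : Q d × Q d) :
    ‖iteratedFDeriv ℝ k a x (vector ∘ e)‖ ≤
      symNorm f m N a * brF f x ^ m * ∏ j, weight f x (e j) := by
  obtain ⟨α, β, hperm⟩ := exists_perm_multiindexWord (List.ofFn e)
  have hdeg : deg α + deg β ≤ N := by
    rwa [← length_multiindexWord, ← hperm.length_eq, List.length_ofFn]
  have hderiv : iteratedFDeriv ℝ k a x (vector ∘ e) = mderiv2 α β a x := by
    rw [mderiv2_eq_wordDeriv, ← wordDeriv_perm vector ha.1 hperm,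
      wordDeriv_ofFn vector (ha.1.of_le (mod_cast le_top))]
  have hweight : brF f x ^ m * ∏ j, weight f x (e j) = symWeight f m α β x := by
    rw [← rpow_mul_prod_weight_multiindexWord hf, ← (hperm.map _).prod_eq, List.map_ofFn,
      List.prod_ofFn]
    rfl
  rw [hderiv, mul_assoc, hweight]
  exact (ha.norm_mderiv2_le_symSup hf α β x).trans
    (mul_le_mul_of_nonneg_right (symSup_le_symNorm hf hdeg a) (symWeight_pos hf α β x).le)

theorem mderiv2_eq_iteratedFDeriv {g : Q d × Q d → ℂ} (hg : ContDiff ℝ ∞ g) (α β : MIdx d)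
    (x : Q d × Q d) :
    mderiv2 α β g x =
      iteratedFDeriv ℝ (multiindexWord α β).length g x (vector ∘ (multiindexWord α β).get) := by
  rw [mderiv2_eq_wordDeriv, ← congrFun (wordDeriv_ofFn vector (hg.of_le (mod_cast le_top)) _) x,
    List.ofFn_get]

variable {σ : Q d × Q d → ℂ} {z : ℂ} {c₀ : ℝ}

theorem IsSymbol.norm_mderiv2_inv_const_sub_le (hf : ∀ r, 0 < f r) (hσ : IsSymbol f m σ)
    (hz : ∀ x, z - σ x ≠ 0) {N : ℕ} {α β : MIdx d} (hN : deg α + deg β ≤ N) (x : Q d × Q d) :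
    ‖mderiv2 α β (fun y => (z - σ y)⁻¹) x‖ ≤
      resolventConst (deg α + deg β) (symNorm f m N σ) *
        (∑ l ∈ range (N + 1), (brF f x ^ m) ^ (l + 1) / ‖z - σ x‖ ^ (l + 1)) *
          symWeight f (-m) α β x := by
  have hb := brF_pos f x
  set L := multiindexWord α β
  rw [← length_multiindexWord] at hN ⊢
  have hsmooth : ContDiff ℝ ∞ fun y => (z - σ y)⁻¹ := (contDiff_const.sub hσ.1).inv hz
  have hword : ∏ j, weight f x (L.get j) = (L.map (weight f x)).prod := by
    rw [← List.prod_ofFn, ← Function.comp_def, ← List.map_ofFn, List.ofFn_get]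
  calc ‖mderiv2 α β (fun y => (z - σ y)⁻¹) x‖
      ≤ (∑ c : OrderedFinpartition L.length, c.length ! *
          ((symNorm f m N σ * brF f x ^ m) ^ c.length / ‖z - σ x‖ ^ (c.length + 1))) *
            ∏ j, weight f x (L.get j) := by
        rw [mderiv2_eq_iteratedFDeriv hsmooth]
        exact norm_iteratedFDeriv_inv_const_sub_comp_apply_le
          (hσ.1.contDiffAt.of_le (mod_cast le_top)) (hz x)
          fun k hk e => hσ.norm_iteratedFDeriv_apply_le hf (hk.trans hN) (L.get ∘ e) x
    _ ≤ resolventConst L.length (symNorm f m N σ) *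
          (∑ l ∈ range (N + 1), (brF f x ^ m) ^ (l + 1) / ‖z - σ x‖ ^ (l + 1)) *
            (brF f x ^ m)⁻¹ * ∏ j, weight f x (L.get j) := by
        have hweight : 0 ≤ ∏ j, weight f x (L.get j) :=
          Finset.prod_nonneg fun j _ => (weight_pos hf x _).le
        gcongr
        exact sum_factorial_mul_pow_div_le hN (symNorm_nonneg hf N σ) (by positivity)
          (norm_nonneg _)
    _ = _ := by
        rw [mul_assoc (_ * _), hword, ← Real.rpow_neg hb.le,
          rpow_mul_prod_weight_multiindexWord hf]

theorem const_sub_ne_zero_of_le (hc₀ : 0 < c₀) (hz : ∀ x, c₀ * brF f x ^ m ≤ ‖z - σ x‖)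
    (x : Q d × Q d) : z - σ x ≠ 0 :=
  norm_pos_iff.1 ((mul_pos hc₀ (Real.rpow_pos_of_pos (brF_pos f x) m)).trans_le (hz x))

theorem rpow_pow_div_norm_const_sub_pow_le (hc₀ : 0 < c₀)
    (hz : ∀ x, c₀ * brF f x ^ m ≤ ‖z - σ x‖) (l : ℕ) (x : Q d × Q d) :
    (brF f x ^ m) ^ l / ‖z - σ x‖ ^ l ≤ c₀⁻¹ ^ l := by
  have hb : 0 < brF f x ^ m := Real.rpow_pos_of_pos (brF_pos f x) m
  rw [← div_pow]
  gcongr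
  rw [div_le_iff₀ (norm_pos_iff.2 (const_sub_ne_zero_of_le hc₀ hz x)), le_inv_mul_iff₀ hc₀]
  exact hz x

theorem IsSymbol.inv_const_sub (hf : ∀ r, 0 < f r) (hσ : IsSymbol f m σ) (hc₀ : 0 < c₀)
    (hz : ∀ x, c₀ * brF f x ^ m ≤ ‖z - σ x‖) : IsSymbol f (-m) (fun x => (z - σ x)⁻¹) := by
  have hne := const_sub_ne_zero_of_le hc₀ hz
  refine ⟨(contDiff_const.sub hσ.1).inv hne, fun α β => ?_⟩
  set n := deg α + deg β
  refine ⟨resolventConst n (symNorm f m n σ) * ∑ l ∈ range (n + 1), c₀⁻¹ ^ (l + 1), fun x => ?_⟩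
  rw [mul_assoc, ← symWeight]
  refine (hσ.norm_mderiv2_inv_const_sub_le hf hne le_rfl x).trans ?_
  have hweight := (symWeight_pos (m := -m) hf α β x).le
  have hconst := resolventConst_nonneg n (symNorm_nonneg (m := m) hf n σ)
  gcongr
  exact rpow_pow_div_norm_const_sub_pow_le hc₀ hz _ x

theorem IsSymbol.symSup_inv_const_sub_le (hf : ∀ r, 0 < f r) (hσ : IsSymbol f m σ) (hc₀ : 0 < c₀)
    (hz : ∀ x, c₀ * brF f x ^ m ≤ ‖z - σ x‖) {N : ℕ} {α β : MIdx d} (hN : deg α + deg β ≤ N) :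
    symSup f (-m) α β (fun x => (z - σ x)⁻¹) ≤
      resolventConst (deg α + deg β) (symNorm f m N σ) *
        ∑ l ∈ range (N + 1), ⨆ x, brF f x ^ (m * ((l : ℝ) + 1)) / ‖z - σ x‖ ^ (l + 1) := by
  have hpow (l : ℕ) (x : Q d × Q d) : brF f x ^ (m * ((l : ℝ) + 1)) = (brF f x ^ m) ^ (l + 1) := by
    rw [Real.rpow_mul (brF_pos f x).le, ← Nat.cast_add_one, Real.rpow_natCast]
  simp only [hpow]
  have hbdd (l : ℕ) :
      BddAbove (Set.range fun x => (brF f x ^ m) ^ (l + 1) / ‖z - σ x‖ ^ (l + 1)) :=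
    ⟨c₀⁻¹ ^ (l + 1),
      Set.forall_mem_range.2 (rpow_pow_div_norm_const_sub_pow_le hc₀ hz (l + 1))⟩
  refine symSup_le hf fun x => ?_
  refine (hσ.norm_mderiv2_inv_const_sub_le hf (const_sub_ne_zero_of_le hc₀ hz) hN x).trans ?_
  have hweight := (symWeight_pos (m := -m) hf α β x).le
  have hconst := resolventConst_nonneg (deg α + deg β) (symNorm_nonneg (m := m) hf N σ)
  gcongr
  exact le_ciSup (hbdd _) x

end PhaseSpace

theorem statement15_general (d N : ℕ) (B : ℝ) :
    ∃ C > (0 : ℝ), ∀ f : ℝ → ℝ, (∀ r, 0 < f r) → ∀ m : ℝ, ∀ σ : Q d × Q d → ℂ,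
      IsSymbol f m σ → symNorm f m N σ ≤ B →
        ∀ z : ℂ, ∀ c₀ > (0 : ℝ), (∀ x : Q d × Q d, c₀ * brF f x ^ m ≤ ‖z - σ x‖) →
          IsSymbol f (-m) (fun x => (z - σ x)⁻¹) ∧
          symNorm f (-m) N (fun x => (z - σ x)⁻¹) ≤
            C * ∑ l ∈ Finset.range (N + 1),
              ⨆ x : Q d × Q d, brF f x ^ (m * ((l : ℝ) + 1)) / ‖z - σ x‖ ^ (l + 1) := by
  let K := ∑ α ∈ idxSet d N, ∑ β ∈ idxSet d N with deg α + deg β ≤ N,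
    resolventConst (deg α + deg β) |B|
  have hK : 0 ≤ K := Finset.sum_nonneg fun α _ => Finset.sum_nonneg fun β _ =>
    resolventConst_nonneg _ (abs_nonneg B)
  refine ⟨K + 1, by positivity, fun f hf m σ hσ hB z c₀ hc₀ hz => ⟨hσ.inv_const_sub hf hc₀ hz, ?_⟩⟩
  set S := ∑ l ∈ Finset.range (N + 1),
    ⨆ x : Q d × Q d, brF f x ^ (m * ((l : ℝ) + 1)) / ‖z - σ x‖ ^ (l + 1)
  have hS : 0 ≤ S := Finset.sum_nonneg fun l _ => Real.iSup_nonneg fun x =>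
    div_nonneg (Real.rpow_nonneg (brF_pos f x).le _) (by positivity)
  have hsup (α β : MIdx d) (hN : deg α + deg β ≤ N) :
      symSup f (-m) α β (fun x => (z - σ x)⁻¹) ≤ resolventConst (deg α + deg β) |B| * S :=
    (hσ.symSup_inv_const_sub_le hf hc₀ hz hN).trans <| mul_le_mul_of_nonneg_right
      (resolventConst_le_resolventConst _ (symNorm_nonneg hf N σ) (hB.trans (le_abs_self B))) hS
  calc symNorm f (-m) N (fun x => (z - σ x)⁻¹)
      ≤ ∑ α ∈ idxSet d N, ∑ β ∈ idxSet d N with deg α + deg β ≤ N,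
          resolventConst (deg α + deg β) |B| * S := by
        rw [symNorm_eq_sum_symSup hf]
        gcongr with α _ β hβ
        exact hsup α β (Finset.mem_filter.1 hβ).2
    _ = K * S := by simp only [K, Finset.sum_mul]
    _ ≤ (K + 1) * S := by gcongr; exact le_add_of_nonneg_right zero_le_one

/-- the resolvent symbol `(z - σ)⁻¹` belongs to `S^{-m}_f` with seminorm
controlled by `Δ_N(z)`. -/
theorem statement15 (d : ℕ) (f : ℝ → ℝ) (hf : GoodF f) (m : ℝ) (N : ℕ) (B : ℝ) :
    ∃ C > (0 : ℝ), ∀ σs : Q d × Q d → ℂ, IsSymbol f m σs → symNorm f m N σs ≤ B →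
      ∀ z : ℂ, ∀ c₀ > (0 : ℝ), (∀ x : Q d × Q d, c₀ * brF f x ^ m ≤ ‖z - σs x‖) →
        IsSymbol f (-m) (fun x => (z - σs x)⁻¹) ∧
        symNorm f (-m) N (fun x => (z - σs x)⁻¹) ≤
          C * ∑ l ∈ Finset.range (N + 1),
            ⨆ x : Q d × Q d, brF f x ^ (m * ((l : ℝ) + 1)) / ‖z - σs x‖ ^ (l + 1) := by
  obtain ⟨C, hC, h⟩ := statement15_general d N B
  exact ⟨C, hC, h f (fun r => one_pos.trans_le (hf.2.1 r)) m⟩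

end
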